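/- Let G be a group, let U = U(ℤ[G]) be the unit group of ℤ[G], and let Z_i(U) denote the i-th term of the upper central series of U. Suppose that either the center Z(G) of G has finite exponent, or G is generated by a set of torsion elements of bounded order (there exists m ≥ 1 and a generating set X of G with x^m = 1 for all x ∈ X). Then for every i ≥ 2 the quotient Z_i(U)/Z_{i−1}(U) has finite exponent; that is, there exists a positive integer m such that u^m ∈ Z_{i−1}(U) for every u ∈ Z_i(U). -/

import Mathlib

/-! The key point: if the commutator `c` of a unit `u` of `ℤ[G]` and an element `g` of `G` is
central, then `c = ⁅h, g⁆` for some `h` in `G`.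

Indeed `c ^ n` is the commutator of `u` and `g ^ n`, so its `ℓ¹` norm is at most `‖u‖₁ ‖u⁻¹‖₁` for
all `n`. Let `x⋆` be the image of `x` under the antipode `∑ r_g g ↦ ∑ r_g g⁻¹`, so that `‖x‖₂²` is
the coefficient of `x x⋆` at `1`. If `x` commutes with `x⋆`, then `‖x ^ 2‖₂² = ‖x x⋆‖₂² ≥ ‖x‖₂⁴`;
hence over `ℤ` the powers of such an `x` stay bounded only if `‖x‖₂² ≤ 1`. So `c = r z` with `r` in
`ℤ` and `z` in `G`, that is, `u g u⁻¹ = r z g`. Summing coefficients over conjugacy classes is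
invariant under conjugation by units, which forces `r = 1` and `z g = h g h⁻¹` for some `h`.

Under either hypothesis on `G`, such central commutators `⁅h, g⁆` have bounded order, and
`⁅u ^ m, g⁆ = ⁅u, g⁆ ^ m` gives the case `i = 2`; the same identity modulo lower terms carries the
bound up the series. -/

open MonoidAlgebra HopfAlgebra
open scoped commutatorElement

section Commutator

variable {G : Type*} [Group G]

theorem commutatorElement_pow_left {x y : G} (h : Commute ⁅x, y⁆ x) (n : ℕ) :
    ⁅x ^ n, y⁆ = ⁅x, y⁆ ^ n := by
  have hconj : y * x⁻¹ * y⁻¹ = x⁻¹ * ⁅x, y⁆ := by rw [commutatorElement_def]; group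
  have hx : Commute x (y * x⁻¹ * y⁻¹) := by
    rw [hconj]
    exact (Commute.refl x).inv_right.mul_right h.symm
  calc ⁅x ^ n, y⁆ = x ^ n * (y * x⁻¹ * y⁻¹) ^ n := by
        rw [conj_pow, commutatorElement_def, inv_pow]; group
    _ = (x * (y * x⁻¹ * y⁻¹)) ^ n := (hx.mul_pow n).symm
    _ = ⁅x, y⁆ ^ n := by rw [hconj, mul_inv_cancel_left]

theorem commutatorElement_pow_right {x y : G} (h : Commute ⁅x, y⁆ y) (n : ℕ) :
    ⁅x, y ^ n⁆ = ⁅x, y⁆ ^ n := by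
  have h' : Commute ⁅y, x⁆ y := by
    rw [← commutatorElement_inv]
    exact h.inv_left
  rw [← commutatorElement_inv, commutatorElement_pow_left h', ← inv_pow, commutatorElement_inv]

theorem pow_mem_upperCentralSeries_succ {m i : ℕ}
    (h : ∀ u ∈ Subgroup.upperCentralSeries G (i + 1), u ^ m ∈ Subgroup.upperCentralSeries G i)
    {u : G} (hu : u ∈ Subgroup.upperCentralSeries G (i + 2)) :
    u ^ m ∈ Subgroup.upperCentralSeries G (i + 1) := by
  rw [Subgroup.mem_upperCentralSeries_succ_iff] at hu ⊢
  intro x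
  let q := QuotientGroup.mk' (Subgroup.upperCentralSeries G i)
  have hq (y : G) : q y = 1 ↔ y ∈ Subgroup.upperCentralSeries G i := QuotientGroup.eq_one_iff y
  have hcomm : Commute ⁅q u, q x⁆ (q u) := by
    rw [← map_commutatorElement, ← commutatorElement_eq_one_iff_commute, ← map_commutatorElement,
      hq]
    exact Subgroup.mem_upperCentralSeries_succ_iff.1 (hu x) u
  rw [← hq, map_commutatorElement, map_pow, commutatorElement_pow_left hcomm,
    ← map_commutatorElement, ← map_pow, hq]
  exact h _ (hu x)

theorem pow_mem_upperCentralSeries_of_pow_mem_center {m : ℕ}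
    (h : ∀ u ∈ Subgroup.upperCentralSeries G 2, u ^ m ∈ Subgroup.center G) (i : ℕ) :
    ∀ u ∈ Subgroup.upperCentralSeries G (i + 2), u ^ m ∈ Subgroup.upperCentralSeries G (i + 1) := by
  induction i with
  | zero => simpa only [zero_add, Subgroup.upperCentralSeries_one] using h
  | succ i ih => exact fun _ => pow_mem_upperCentralSeries_succ ih

end Commutator

section Norms

variable {R G : Type*}

/-- The `ℓ¹` norm of the coefficients, with values in the coefficient ring. -/
def l1Norm [Ring R] [LinearOrder R] (x : R[G]) : R := x.coeff.sum fun _ r => |r|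

/-- The square of the `ℓ²` norm of the coefficients, with values in the coefficient ring. -/
def sqNorm [Semiring R] (x : R[G]) : R := x.coeff.sum fun _ r => r ^ 2

section OrderedRing

variable [Ring R] [LinearOrder R] [IsOrderedRing R]

theorem l1Norm_single (g : G) (r : R) : l1Norm (single g r) = |r| :=
  Finsupp.sum_single_index abs_zero

theorem l1Norm_nonneg (x : R[G]) : 0 ≤ l1Norm x :=
  Finset.sum_nonneg fun _ _ => abs_nonneg _

theorem l1Norm_add_le (x y : R[G]) : l1Norm (x + y) ≤ l1Norm x + l1Norm y := by
  classical
  have l1Norm_eq (z : R[G]) (hz : z.coeff.support ⊆ x.coeff.support ∪ y.coeff.support) :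
      l1Norm z = ∑ g ∈ x.coeff.support ∪ y.coeff.support, |z.coeff g| :=
    Finsupp.sum_of_support_subset _ hz _ fun _ _ => abs_zero
  rw [l1Norm_eq (x + y) Finsupp.support_add, l1Norm_eq x Finset.subset_union_left,
    l1Norm_eq y Finset.subset_union_right, ← Finset.sum_add_distrib]
  exact Finset.sum_le_sum fun g _ => abs_add_le _ _

theorem l1Norm_sum_le {ι : Type*} (s : Finset ι) (f : ι → R[G]) :
    l1Norm (∑ i ∈ s, f i) ≤ ∑ i ∈ s, l1Norm (f i) :=
  Finset.le_sum_of_subadditive _ (by simp [l1Norm]) l1Norm_add_le s f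

theorem l1Norm_mul_le [Mul G] (x y : R[G]) : l1Norm (x * y) ≤ l1Norm x * l1Norm y := by
  calc l1Norm (x * y)
      = l1Norm (∑ g ∈ x.coeff.support, ∑ h ∈ y.coeff.support,
          single (g * h) (x.coeff g * y.coeff h)) := by rw [MonoidAlgebra.mul_def]; rfl
    _ ≤ ∑ g ∈ x.coeff.support, ∑ h ∈ y.coeff.support, |x.coeff g| * |y.coeff h| :=
        (l1Norm_sum_le _ _).trans <| Finset.sum_le_sum fun g _ =>
          (l1Norm_sum_le _ _).trans_eq <| Finset.sum_congr rfl fun h _ => by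
            rw [l1Norm_single, abs_mul]
    _ = l1Norm x * l1Norm y := (Finset.sum_mul_sum _ _ _ _).symm

theorem sqNorm_nonneg (x : R[G]) : 0 ≤ sqNorm x :=
  Finset.sum_nonneg fun _ _ => sq_nonneg _

theorem sqNorm_le_l1Norm_sq (x : R[G]) : sqNorm x ≤ l1Norm x ^ 2 := by
  have h : sqNorm x = ∑ g ∈ x.coeff.support, |x.coeff g| ^ 2 := by
    simp only [sqNorm, Finsupp.sum, sq_abs]
  rw [h]
  exact Finset.sum_sq_le_sq_sum_of_nonneg fun _ _ => abs_nonneg _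

theorem coeff_sq_le_sqNorm (x : R[G]) (g : G) : x.coeff g ^ 2 ≤ sqNorm x := by
  by_cases hg : g ∈ x.coeff.support
  · exact Finset.single_le_sum (f := fun g => x.coeff g ^ 2) (fun _ _ => sq_nonneg _) hg
  · rw [Finsupp.notMem_support_iff.1 hg, zero_pow two_ne_zero]
    exact sqNorm_nonneg x

end OrderedRing

theorem exists_eq_single_of_sqNorm_le_one [Nonempty G] {x : ℤ[G]} (h : sqNorm x ≤ 1) :
    ∃ g r, x = single g r := by
  have hcard : (x.coeff.support.card : ℤ) ≤ sqNorm x := by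
    rw [Finset.card_eq_sum_ones, Nat.cast_sum]
    refine Finset.sum_le_sum fun g hg => ?_
    have : 0 < x.coeff g ^ 2 := sq_pos_of_ne_zero (Finsupp.mem_support_iff.1 hg)
    push_cast
    omega
  obtain ⟨g, r, hx⟩ := Finsupp.card_support_le_one'.1 (by omega : x.coeff.support.card ≤ 1)
  exact ⟨g, r, coeff_injective hx⟩

end Norms

section Antipode

variable {R G : Type*} [Group G]

theorem coeff_antipode [CommSemiring R] (x : R[G]) (g : G) :
    (antipode R x).coeff g = x.coeff g⁻¹ := by
  classical
  induction x using MonoidAlgebra.induction_linear with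
  | zero => simp
  | add x y hx hy => simp [hx, hy]
  | single h r => simp [Finsupp.single_apply, inv_eq_iff_eq_inv]

theorem antipode_antipode [CommSemiring R] (x : R[G]) : antipode R (antipode R x) = x := by
  ext g
  rw [coeff_antipode, coeff_antipode, inv_inv]

theorem antipode_pow [CommSemiring R] (x : R[G]) (n : ℕ) :
    antipode R (x ^ n) = antipode R x ^ n := by
  induction n with
  | zero => simp
  | succ n ih => rw [pow_succ, antipode_mul_antidistrib, ih, pow_succ']

theorem coeff_mul_antipode_one [CommSemiring R] (x : R[G]) :
    (x * antipode R x).coeff 1 = sqNorm x := by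
  rw [coeff_mul_apply_left]
  exact Finset.sum_congr rfl fun g _ => by simp only [mul_one, coeff_antipode, inv_inv, sq]

theorem sq_sqNorm_le_sqNorm_sq [CommRing R] [LinearOrder R] [IsOrderedRing R]
    {x : R[G]} (hx : Commute x (antipode R x)) : sqNorm x ^ 2 ≤ sqNorm (x ^ 2) := by
  have h : sqNorm (x ^ 2) = sqNorm (x * antipode R x) := by
    rw [← coeff_mul_antipode_one, ← coeff_mul_antipode_one, antipode_pow,
      antipode_mul_antidistrib, antipode_antipode, ← hx.mul_pow, sq]
  rw [h, ← coeff_mul_antipode_one x]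
  exact coeff_sq_le_sqNorm _ _

theorem sqNorm_le_one_of_forall_sqNorm_pow_le {x : ℤ[G]}
    (hx : Commute x (antipode ℤ x)) {B : ℤ} (hB : ∀ n : ℕ, sqNorm (x ^ n) ≤ B) : sqNorm x ≤ 1 := by
  obtain ⟨_, ⟨n, rfl⟩, hmax⟩ := Int.exists_greatest_of_bdd
    (P := (· ∈ Set.range fun n : ℕ => sqNorm (x ^ n))) ⟨B, by rintro _ ⟨n, rfl⟩; exact hB n⟩
    ⟨_, 1, rfl⟩
  have hsq : sqNorm (x ^ n) ^ 2 ≤ sqNorm (x ^ n) :=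
    calc sqNorm (x ^ n) ^ 2 ≤ sqNorm ((x ^ n) ^ 2) :=
          sq_sqNorm_le_sqNorm_sq (by rw [antipode_pow]; exact hx.pow_pow n n)
      _ ≤ sqNorm (x ^ n) := hmax _ ⟨n * 2, congrArg sqNorm (pow_mul x n 2)⟩
  have hle : sqNorm x ≤ sqNorm (x ^ n) := hmax _ ⟨1, congrArg sqNorm (pow_one x)⟩
  nlinarith

end Antipode

section ConjugacyClasses

variable {R G : Type*} [CommSemiring R] [Group G]

/-- The universal trace of `R[G]`: the sums of the coefficients over the conjugacy classes
of `G`. -/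
noncomputable def conjClassesSum : R[G] →+ (ConjClasses G →₀ R) :=
  (Finsupp.mapDomain.addMonoidHom ConjClasses.mk).comp coeffAddEquiv.toAddMonoidHom

theorem conjClassesSum_single (g : G) (r : R) :
    conjClassesSum (single g r) = Finsupp.single (ConjClasses.mk g) r :=
  Finsupp.mapDomain_single

theorem conjClassesSum_mul_comm (x y : R[G]) : conjClassesSum (x * y) = conjClassesSum (y * x) := by
  induction x using MonoidAlgebra.induction_linear with
  | zero => simp
  | add a b ha hb => simp only [add_mul, mul_add, map_add, ha, hb]
  | single g r =>
    induction y using MonoidAlgebra.induction_linear with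
    | zero => simp
    | add a b ha hb => simp only [add_mul, mul_add, map_add, ha, hb]
    | single h s =>
      have hconj : ConjClasses.mk (g * h) = ConjClasses.mk (h * g) :=
        ConjClasses.mk_eq_mk_iff_isConj.2 (isConj_iff.2 ⟨h, by group⟩)
      rw [single_mul_single, single_mul_single, conjClassesSum_single, conjClassesSum_single,
        hconj, mul_comm r]

theorem isConj_and_eq_one_of_units_conj_eq_single [Nontrivial R] {u : R[G]ˣ} {g k : G} {r : R}
    (h : u * of R G g * ↑u⁻¹ = single k r) : IsConj g k ∧ r = 1 := by
  have htrace :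
      Finsupp.single (ConjClasses.mk g) (1 : R) = Finsupp.single (ConjClasses.mk k) r := by
    rw [← conjClassesSum_single, ← conjClassesSum_single, ← h, conjClassesSum_mul_comm,
      Units.inv_mul_cancel_left, of_apply]
  obtain ⟨hgk, hr⟩ | ⟨h10, -⟩ := (Finsupp.single_eq_single_iff ..).1 htrace
  · exact ⟨ConjClasses.mk_eq_mk_iff_isConj.1 hgk, hr.symm⟩
  · exact absurd h10 one_ne_zero

end ConjugacyClasses

section Units

/-- The embedding of a group into the units of its group ring. -/
noncomputable abbrev groupUnits (R G : Type*) [Semiring R] [Group G] : G →* R[G]ˣ :=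
  (of R G).toHomUnits

theorem commute_of_forall_commute_of {R M : Type*} [CommSemiring R] [Monoid M]
    {x : R[M]} (h : ∀ g, Commute x (of R M g)) (y : R[M]) : Commute x y := by
  induction y using MonoidAlgebra.induction_on with
  | of g => exact h g
  | add a b ha hb => exact ha.add_right hb
  | smul r a ha => exact ha.smul_right r

variable {R G : Type*} [Group G]

theorem groupUnits_injective [Semiring R] [Nontrivial R] :
    Function.Injective (groupUnits R G) := fun _ _ h =>
  of_injective (congrArg Units.val h)

theorem commute_of_mem_center_units [CommSemiring R] {c : R[G]ˣ}
    (hc : c ∈ Subgroup.center R[G]ˣ) (y : R[G]) : Commute (c : R[G]) y :=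
  commute_of_forall_commute_of
    (fun g => (congrArg Units.val (Subgroup.mem_center_iff.1 hc (groupUnits R G g))).symm) y

theorem mem_center_units_of_closure_eq_top [CommSemiring R] {X : Set G}
    (hX : Subgroup.closure X = ⊤) {u : R[G]ˣ}
    (hu : ∀ x ∈ X, Commute u (groupUnits R G x)) : u ∈ Subgroup.center R[G]ˣ := by
  have hle : Subgroup.closure X ≤ (Subgroup.centralizer {u}).comap (groupUnits R G) :=
    (Subgroup.closure_le _).2 fun x hx => Subgroup.mem_centralizer_singleton_iff.2 (hu x hx).eq.symm
  have hcomm (g : G) : Commute u (groupUnits R G g) :=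
    (Subgroup.mem_centralizer_singleton_iff.1 (hle (hX ▸ Subgroup.mem_top g))).symm
  exact Subgroup.mem_center_iff.2 fun v => Units.ext
    (commute_of_forall_commute_of (fun g => congrArg Units.val (hcomm g).eq) v).eq.symm

theorem l1Norm_commutatorElement_groupUnits_le [Ring R] [LinearOrder R] [IsOrderedRing R]
    (u : R[G]ˣ) (g : G) :
    l1Norm (↑⁅u, groupUnits R G g⁆ : R[G]) ≤ l1Norm (u : R[G]) * l1Norm (↑u⁻¹ : R[G]) := by
  have l1Norm_mul_of_le (x : R[G]) (h : G) : l1Norm (x * of R G h) ≤ l1Norm x := by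
    simpa only [of_apply, l1Norm_single, abs_one, mul_one] using l1Norm_mul_le x (of R G h)
  calc l1Norm (↑⁅u, groupUnits R G g⁆ : R[G])
      = l1Norm ((u : R[G]) * of R G g * ↑u⁻¹ * of R G g⁻¹) := by
        rw [commutatorElement_def, ← map_inv]; rfl
    _ ≤ l1Norm ((u : R[G]) * of R G g * ↑u⁻¹) := l1Norm_mul_of_le _ _
    _ ≤ l1Norm ((u : R[G]) * of R G g) * l1Norm (↑u⁻¹ : R[G]) := l1Norm_mul_le _ _
    _ ≤ l1Norm (u : R[G]) * l1Norm (↑u⁻¹ : R[G]) :=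
        mul_le_mul_of_nonneg_right (l1Norm_mul_of_le _ _) (l1Norm_nonneg _)

end Units

section IntegralGroupRing

variable {G : Type*} [Group G] {u : ℤ[G]ˣ} {g : G}

theorem exists_eq_single_of_commutatorElement_mem_center
    (hc : ⁅u, groupUnits ℤ G g⁆ ∈ Subgroup.center ℤ[G]ˣ) :
    ∃ z r, (↑⁅u, groupUnits ℤ G g⁆ : ℤ[G]) = single z r := by
  have hpow (n : ℕ) : ⁅u, groupUnits ℤ G g⁆ ^ n = ⁅u, groupUnits ℤ G (g ^ n)⁆ := by
    rw [map_pow, commutatorElement_pow_right (Subgroup.mem_center_iff.1 hc _).symm]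
  refine exists_eq_single_of_sqNorm_le_one <| sqNorm_le_one_of_forall_sqNorm_pow_le
    (commute_of_mem_center_units hc _)
    (B := (l1Norm (u : ℤ[G]) * l1Norm (↑u⁻¹ : ℤ[G])) ^ 2) fun n => ?_
  rw [← Units.val_pow_eq_pow_val, hpow]
  exact (sqNorm_le_l1Norm_sq _).trans
    (pow_le_pow_left₀ (l1Norm_nonneg _) (l1Norm_commutatorElement_groupUnits_le u _) 2)

theorem exists_commutatorElement_eq_of_mem_center
    (hc : ⁅u, groupUnits ℤ G g⁆ ∈ Subgroup.center ℤ[G]ˣ) :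
    ∃ h : G, ⁅h, g⁆ ∈ Subgroup.center G ∧ ⁅u, groupUnits ℤ G g⁆ = groupUnits ℤ G ⁅h, g⁆ := by
  obtain ⟨z, r, hz⟩ := exists_eq_single_of_commutatorElement_mem_center hc
  have hconj : u * of ℤ G g * ↑u⁻¹ = single (z * g) r :=
    calc u * of ℤ G g * ↑u⁻¹
        = ↑(⁅u, groupUnits ℤ G g⁆ * groupUnits ℤ G g) := by
          rw [commutatorElement_def, inv_mul_cancel_right]; rfl
      _ = single (z * g) r := by
          rw [Units.val_mul, hz, MonoidHom.coe_toHomUnits, of_apply, single_mul_single, mul_one]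
  obtain ⟨hzg, rfl⟩ := isConj_and_eq_one_of_units_conj_eq_single hconj
  obtain ⟨h, hh⟩ := isConj_iff.1 hzg
  have hz' : ⁅h, g⁆ = z := by rw [commutatorElement_def, hh, mul_inv_cancel_right]
  have hcz : ⁅u, groupUnits ℤ G g⁆ = groupUnits ℤ G ⁅h, g⁆ := Units.ext (by rw [hz, hz']; rfl)
  refine ⟨h, Subgroup.mem_center_iff.2 fun k => groupUnits_injective (R := ℤ) ?_, hcz⟩
  rw [map_mul, map_mul, ← hcz]
  exact Subgroup.mem_center_iff.1 hc _

theorem upperCentralSeries_quotient_finite_exponent_general {X : Set G}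
    (hX : Subgroup.closure X = ⊤) {m : ℕ}
    (h : ∀ x ∈ X, ∀ y : G, ⁅y, x⁆ ∈ Subgroup.center G → ⁅y, x⁆ ^ m = 1) (i : ℕ) :
    ∀ u ∈ Subgroup.upperCentralSeries ℤ[G]ˣ (i + 2),
      u ^ m ∈ Subgroup.upperCentralSeries ℤ[G]ˣ (i + 1) := by
  refine pow_mem_upperCentralSeries_of_pow_mem_center (fun u hu => ?_) i
  refine mem_center_units_of_closure_eq_top hX fun x hx => ?_
  have hc : ⁅u, groupUnits ℤ G x⁆ ∈ Subgroup.center ℤ[G]ˣ := by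
    rw [← Subgroup.upperCentralSeries_one]
    exact Subgroup.mem_upperCentralSeries_succ_iff.1 hu _
  obtain ⟨y, hy, hyx⟩ := exists_commutatorElement_eq_of_mem_center hc
  rw [← commutatorElement_eq_one_iff_commute,
    commutatorElement_pow_left (Subgroup.mem_center_iff.1 hc u).symm, hyx, ← map_pow, h x hx y hy,
    map_one]

end IntegralGroupRing

/-- Let `U = U(ℤ[G])` be the unit group of the integral group ring of `G`.  If the center
of `G` has finite exponent, or `G` is generated by a set of torsion elements of bounded
order, then for every `i ≥ 2` the quotient `Z_i(U)/Z_{i−1}(U)` of consecutive terms of the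
upper central series of `U` has finite exponent. -/
theorem upperCentralSeries_quotient_finite_exponent {G : Type*} [Group G]
    (h : (∃ m : ℕ, 0 < m ∧ ∀ g ∈ Subgroup.center G, g ^ m = 1) ∨
      (∃ m : ℕ, 0 < m ∧ ∃ X : Set G, Subgroup.closure X = ⊤ ∧ ∀ x ∈ X, x ^ m = 1)) :
    ∀ i : ℕ, 2 ≤ i →
      ∃ m : ℕ, 0 < m ∧
        ∀ u ∈ upperCentralSeries (MonoidAlgebra ℤ G)ˣ i,
          u ^ m ∈ upperCentralSeries (MonoidAlgebra ℤ G)ˣ (i - 1) := by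
  intro i hi
  obtain ⟨j, rfl⟩ := Nat.exists_eq_add_of_le' hi
  rcases h with ⟨m, hm, hZ⟩ | ⟨m, hm, X, hX, hpow⟩
  · exact ⟨m, hm, upperCentralSeries_quotient_finite_exponent_general Subgroup.closure_univ
      (fun _ _ _ hz => hZ _ hz) j⟩
  · refine ⟨m, hm, upperCentralSeries_quotient_finite_exponent_general hX (fun x hx y hz => ?_) j⟩
    rw [← commutatorElement_pow_right (Subgroup.mem_center_iff.1 hz x).symm, hpow x hx,
      commutatorElement_one_right]
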